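/- arXiv:2512.10928 — 3 statements merged into one kernel-verified Lean document; each statement's English description precedes it below -/
import Mathlib

section
/- Let n ≥ 1 and let g ∈ ℂ[x,y,z] be homogeneous of degree n. Then y·∂x g + z·∂y g = 0 if and only if g is a ℂ-linear combination of the polynomials (y² − 2xz)^ℓ · z^{n−2ℓ} for 0 ≤ ℓ ≤ ⌊n/2⌋. In particular, for n = 2m even the solutions are exactly the polynomials Σ_{ℓ} λ_ℓ (y² − 2xz)^ℓ z^{m−ℓ} with λ_ℓ ∈ ℂ, i.e., products of conics in the hyperosculating pencil spanned by y² − 2xz and z² (the Płoski curves when reduced). -/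
/-!
Let `D = y ∂x + z ∂y` and write `g(a, b, c)` for the coefficient of `x ^ a * y ^ b * z ^ c` in `g`.
The equation `D g = 0` amounts to the recursion
`(a + 1) g(a + 1, b, c + 1) + (b + 2) g(a, b + 2, c) = 0` together with the boundary conditions
`g(a + 1, b, 0) = 0` and `g(a, 1, c) = 0`. Running the recursion upwards in `b`, the condition
`g(a, 1, c) = 0` kills all coefficients with `b` odd. Running it upwards in `a`, an element of the
kernel of `D` is determined by its coefficients with `a = 0`, that is by `g(0, y, z)`, which is
therefore even in `y`.

Since `D` is a derivation killing `q = y ^ 2 - 2 x z` and `z`, all the polynomials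
`q ^ l * z ^ (n - 2 l)` lie in the kernel. Modulo `x` such a polynomial is `y ^ (2 l) * z ^ (n - 2 l)`,
so the combination with coefficients `g(0, 2 l, n - 2 l)` agrees with `g` modulo `x`, hence equals
`g`.
-/

open MvPolynomial

/-- The exponent vector of the monomial `x ^ a * y ^ b * z ^ c`. -/
noncomputable def expo (a b c : ℕ) : Fin 3 →₀ ℕ :=
  Finsupp.single 0 a + Finsupp.single 1 b + Finsupp.single 2 c

@[simp] lemma expo_zero (a b c : ℕ) : expo a b c 0 = a := by simp [expo]
@[simp] lemma expo_one (a b c : ℕ) : expo a b c 1 = b := by simp [expo]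
@[simp] lemma expo_two (a b c : ℕ) : expo a b c 2 = c := by simp [expo]

lemma eq_expo (m : Fin 3 →₀ ℕ) : m = expo (m 0) (m 1) (m 2) := by
  ext i
  fin_cases i <;> simp

lemma expo_add_x (a b c : ℕ) : expo a b c + Finsupp.single 0 1 = expo (a + 1) b c := by
  ext i
  fin_cases i <;> simp [expo]

lemma expo_add_y (a b c : ℕ) : expo a b c + Finsupp.single 1 1 = expo a (b + 1) c := by
  ext i
  fin_cases i <;> simp [expo]

lemma expo_sub_y (a b c : ℕ) : expo a (b + 1) c - Finsupp.single 1 1 = expo a b c := by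
  ext i
  fin_cases i <;> simp [expo]

lemma expo_sub_z (a b c : ℕ) : expo a b (c + 1) - Finsupp.single 2 1 = expo a b c := by
  ext i
  fin_cases i <;> simp [expo]

lemma degree_expo (a b c : ℕ) : (expo a b c).degree = a + b + c := by
  simp [expo, map_add, Finsupp.degree_single]

/-- The derivation `y ∂x + z ∂y`. -/
noncomputable def D : Derivation ℂ (MvPolynomial (Fin 3) ℂ) (MvPolynomial (Fin 3) ℂ) :=
  (X 1 : MvPolynomial (Fin 3) ℂ) • pderiv 0 + (X 2 : MvPolynomial (Fin 3) ℂ) • pderiv 1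

lemma D_apply (g : MvPolynomial (Fin 3) ℂ) :
    D g = X 1 * pderiv 0 g + X 2 * pderiv 1 g := by
  simp [D]

lemma D_conic : D (X 1 ^ 2 - C 2 * X 0 * X 2) = 0 := by
  simp only [D_apply, map_sub, Derivation.leibniz, Derivation.leibniz_pow, pderiv_C, pderiv_X,
    smul_eq_mul]
  simp
  have h : (C 2 : MvPolynomial (Fin 3) ℂ) = 2 := map_ofNat C 2
  rw [h]
  ring

lemma D_z : D (X 2) = 0 := by
  simp [D_apply, pderiv_X]

lemma D_combination (n : ℕ) (lam : ℕ → ℂ) :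
    D (∑ l ∈ Finset.range (n / 2 + 1),
      C (lam l) * (X 1 ^ 2 - C 2 * X 0 * X 2) ^ l * X 2 ^ (n - 2 * l)) = 0 := by
  rw [map_sum]
  refine Finset.sum_eq_zero fun l _ => ?_
  rw [Derivation.leibniz, Derivation.leibniz, Derivation.leibniz_pow, Derivation.leibniz_pow,
    D_conic, D_z]
  simp

section Kernel

variable {g : MvPolynomial (Fin 3) ℂ}

lemma kernel_recursion (h : D g = 0) (a b c : ℕ) :
    ((a : ℂ) + 1) * coeff (expo (a + 1) b (c + 1)) g
      + ((b : ℂ) + 2) * coeff (expo a (b + 2) c) g = 0 := by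
  have := congrArg (coeff (expo a (b + 1) (c + 1))) h
  simp [D_apply, coeff_X_mul', coeff_pderiv, expo_sub_y, expo_sub_z, expo_add_x, expo_add_y] at this
  linear_combination this

lemma kernel_z_zero (h : D g = 0) (a b : ℕ) : coeff (expo (a + 1) b 0) g = 0 := by
  have := congrArg (coeff (expo a (b + 1) 0)) h
  simp [D_apply, coeff_X_mul', coeff_pderiv, expo_sub_y, expo_add_x] at this
  exact this.resolve_right (Nat.cast_add_one_ne_zero a)

lemma kernel_y_one (h : D g = 0) (a c : ℕ) : coeff (expo a 1 c) g = 0 := by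
  have := congrArg (coeff (expo a 0 (c + 1))) h
  simpa [D_apply, coeff_X_mul', coeff_pderiv, expo_sub_z, expo_add_y] using this

lemma kernel_y_odd (h : D g = 0) (k a c : ℕ) : coeff (expo a (2 * k + 1) c) g = 0 := by
  induction k generalizing a c with
  | zero => exact kernel_y_one h a c
  | succ k ih =>
    have hr := kernel_recursion h a (2 * k + 1) c
    rw [ih, mul_zero, zero_add] at hr
    refine (mul_eq_zero.mp hr).resolve_left ?_
    exact_mod_cast Nat.succ_ne_zero (2 * k + 1 + 1)

/-- An element of the kernel of `D` divisible by `x` vanishes. -/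
lemma kernel_eq_zero (h : D g = 0) (h0 : ∀ b c, coeff (expo 0 b c) g = 0) : g = 0 := by
  have key : ∀ a b c, coeff (expo a b c) g = 0 := by
    intro a
    induction a with
    | zero => exact h0
    | succ a ih =>
      intro b c
      cases c with
      | zero => exact kernel_z_zero h a b
      | succ c =>
        have hr := kernel_recursion h a b c
        rw [ih, mul_zero, add_zero] at hr
        exact (mul_eq_zero.mp hr).resolve_left (Nat.cast_add_one_ne_zero a)
  ext m
  rw [eq_expo m, key, coeff_zero]

end Kernel

/-- Modulo `x`, the polynomial `(y ^ 2 - 2 x z) ^ l * z ^ k` is the monomial `y ^ (2 l) * z ^ k`. -/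
lemma coeff_conic_pow (r : ℂ) (l k b c : ℕ) :
    coeff (expo 0 b c) (C r * (X 1 ^ 2 - C 2 * X 0 * X 2) ^ l * X 2 ^ k)
      = if 2 * l = b ∧ k = c then r else 0 := by
  obtain ⟨p, hp⟩ := sub_dvd_pow_sub_pow
    (X 1 ^ 2 - C 2 * X 0 * X 2 : MvPolynomial (Fin 3) ℂ) (X 1 ^ 2) l
  have hmon : monomial (expo 0 (2 * l) k) r
      = C r * (X 1 ^ 2) ^ l * (X 2 : MvPolynomial (Fin 3) ℂ) ^ k := by
    rw [← pow_mul, expo, Finsupp.single_zero, zero_add, monomial_add_single,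
      C_mul_X_pow_eq_monomial]
  have hsplit : C r * (X 1 ^ 2 - C 2 * X 0 * X 2) ^ l * X 2 ^ k
      = monomial (expo 0 (2 * l) k) r + X 0 * (-C r * C 2 * X 2 * p * X 2 ^ k) := by
    rw [hmon]
    linear_combination (C r * X 2 ^ k) * hp
  have hiff : expo 0 (2 * l) k = expo 0 b c ↔ 2 * l = b ∧ k = c := by
    constructor
    · intro h
      exact ⟨by simpa using DFunLike.congr_fun h 1, by simpa using DFunLike.congr_fun h 2⟩
    · rintro ⟨rfl, rfl⟩
      rfl
  rw [hsplit, coeff_add, coeff_monomial, coeff_X_mul',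
    if_neg (by simp : 0 ∉ (expo 0 b c).support), add_zero]
  simp only [hiff]

theorem stmt_16 (n : ℕ) (hn : 1 ≤ n) (g : MvPolynomial (Fin 3) ℂ)
    (hg : g.IsHomogeneous n) :
    X 1 * pderiv 0 g + X 2 * pderiv 1 g = 0 ↔
    ∃ lam : ℕ → ℂ, g = ∑ l ∈ Finset.range (n / 2 + 1),
      C (lam l) * (X 1 ^ 2 - C 2 * X 0 * X 2) ^ l * X 2 ^ (n - 2 * l) := by
  rw [← D_apply]
  constructor
  · intro h
    refine ⟨fun l => coeff (expo 0 (2 * l) (n - 2 * l)) g, sub_eq_zero.mp (kernel_eq_zero ?_ ?_)⟩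
    · rw [map_sub, h, D_combination, sub_zero]
    · intro b c
      rw [coeff_sub, coeff_sum, sub_eq_zero]
      simp only [coeff_conic_pow]
      obtain ⟨k, rfl | rfl⟩ := Nat.even_or_odd' b
      · by_cases hd : 2 * k + c = n
        · rw [Finset.sum_eq_single_of_mem k (Finset.mem_range.mpr (by omega))
            (fun l _ hl => if_neg (by omega)), if_pos (by omega)]
          congr 2
          omega
        · rw [hg.coeff_eq_zero (by rw [degree_expo]; omega)]
          refine (Finset.sum_eq_zero fun l hl => if_neg ?_).symm
          have := Finset.mem_range.mp hl
          omega
      · rw [kernel_y_odd h]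
        exact (Finset.sum_eq_zero fun l _ => if_neg (by omega)).symm
  · rintro ⟨lam, rfl⟩
    exact D_combination n lam
end

section
/- Let n ≥ 2 and let H be a maximal segment of T' different from the three edge segments H₁, H₂, H₃ (i.e., H ∈ ℋ₂). Then there exists a coordinate ℓ ∈ {1,2,3} such that every point of H has ℓ-th coordinate at least 1; equivalently, the greatest common divisor of the monomials x^i y^j z^k over all (i,j,k) ∈ H is not 1, so that the associated polynomial g_H is always divisible by x, by y, or by z. -/
/-!
If the conclusion fails, then for each `ℓ` the segment contains a point `P ℓ` with `ℓ`-th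
coordinate `0`, that is, a point on each side of the triangle. Since the vertices are not in `T'`,
the other two coordinates of `P ℓ` are positive. The three points are collinear, so one of them,
say `P ℓ`, lies between the other two (`Collinear.wbtw_or_wbtw_or_wbtw`). Its `ℓ`-th coordinate is
then a convex combination of two positive numbers, hence positive, which is a contradiction.
-/

open scoped BigOperators

/-- Embedding of an integer point of `ℕ³` into `ℚ³`. -/
def emb (p : ℕ × ℕ × ℕ) : Fin 3 → ℚ := ![(p.1 : ℚ), (p.2.1 : ℚ), (p.2.2 : ℚ)]

/-- The triangle grid of size `n` with the three vertices removed. -/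
def Tprime (n : ℕ) : Set (ℕ × ℕ × ℕ) :=
  {p | p.1 + p.2.1 + p.2.2 = n} \ {(n, 0, 0), (0, n, 0), (0, 0, n)}

/-- `H` is a maximal segment of `T'`: it has at least two points, all its points
are collinear, and it contains every point of `T'` on the line through two of its
points. -/
def IsMaxSegment (n : ℕ) (H : Set (ℕ × ℕ × ℕ)) : Prop :=
  H ⊆ Tprime n ∧ (∃ P ∈ H, ∃ Q ∈ H, P ≠ Q) ∧ Collinear ℚ (emb '' H) ∧
    ∀ R ∈ Tprime n,
      (∃ P ∈ H, ∃ Q ∈ H, P ≠ Q ∧ Collinear ℚ {emb P, emb Q, emb R}) → R ∈ H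

/-- The `ℓ`-th coordinate of a point of `ℕ³`. -/
def coord (ℓ : Fin 3) (p : ℕ × ℕ × ℕ) : ℕ := ![p.1, p.2.1, p.2.2] ℓ

/-- The three-element sets `Γ₁, Γ₂, Γ₃`. -/
def Gam (n : ℕ) (ℓ : Fin 3) : Set (ℕ × ℕ × ℕ) :=
  ![({(n - 1, 1, 0), (n - 1, 0, 1), (n - 2, 1, 1)} : Set (ℕ × ℕ × ℕ)),
    ({(0, n - 1, 1), (1, n - 1, 0), (1, n - 2, 1)} : Set (ℕ × ℕ × ℕ)),
    ({(0, 1, n - 1), (1, 0, n - 1), (1, 1, n - 2)} : Set (ℕ × ℕ × ℕ))] ℓ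

/-- The sets `Δ₁, Δ₂, Δ₃`: points of `T'` whose `ℓ`-th coordinate is at most 1. -/
def Delta (n : ℕ) (ℓ : Fin 3) : Set (ℕ × ℕ × ℕ) :=
  {p ∈ Tprime n | coord ℓ p ≤ 1}

/-- The three edge segments `H₁, H₂, H₃` of `T'`. -/
def Edge (n : ℕ) (ℓ : Fin 3) : Set (ℕ × ℕ × ℕ) :=
  {p ∈ Tprime n | coord ℓ p = 0 ∧ ∀ m : Fin 3, m ≠ ℓ → 0 < coord m p}

/-- `ℋ₂`: the maximal segments of `T'` other than the three edge segments. -/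
def Htwo (n : ℕ) : Set (Set (ℕ × ℕ × ℕ)) :=
  {H | IsMaxSegment n H ∧ ∀ ℓ : Fin 3, H ≠ Edge n ℓ}

/-- `ℋ_red`: the elements of `ℋ₂` meeting some `Γ_ℓ` and the corresponding `Δ_ℓ`. -/
def Hred (n : ℕ) : Set (Set (ℕ × ℕ × ℕ)) :=
  {H ∈ Htwo n | ∃ ℓ : Fin 3, (H ∩ Gam n ℓ).Nonempty ∧ (H ∩ Delta n ℓ).Nonempty}

/-- A point of `T'` has at most one vanishing coordinate, because the vertices are removed. -/
lemma coord_pos_of_coord_eq_zero {n : ℕ} {p : ℕ × ℕ × ℕ} (hp : p ∈ Tprime n) {ℓ m : Fin 3}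
    (hℓ : coord ℓ p = 0) (hm : m ≠ ℓ) : 0 < coord m p := by
  obtain ⟨a, b, c⟩ := p
  simp only [Tprime, Set.mem_sdiff, Set.mem_ofPred_eq, Set.mem_insert_iff,
    Set.mem_singleton_iff, Prod.mk.injEq] at hp
  fin_cases ℓ <;> fin_cases m <;> simp [coord] at hℓ hm ⊢ <;> omega

lemma emb_apply (p : ℕ × ℕ × ℕ) (ℓ : Fin 3) : emb p ℓ = coord ℓ p := by
  fin_cases ℓ <;> simp [emb, coord]

lemma pos_of_wbtw {x y z : Fin 3 → ℚ} (h : Wbtw ℚ x y z) {i : Fin 3} (hx : 0 < x i)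
    (hz : 0 < z i) : 0 < y i := by
  obtain ⟨t, ⟨h0, h1⟩, rfl⟩ := h
  rw [AffineMap.lineMap_apply_module]
  exact (convex_Ioi (0 : ℚ)) hx hz (sub_nonneg.2 h1) h0 (sub_add_cancel 1 t)

theorem stmt_17 (n : ℕ) (hn : 2 ≤ n) (H : Set (ℕ × ℕ × ℕ)) (hH : H ∈ Htwo n) :
    ∃ ℓ : Fin 3, ∀ p ∈ H, 1 ≤ coord ℓ p := by
  obtain ⟨⟨hsub, -, hcol, -⟩, -⟩ := hH
  by_contra! hcon
  choose P hPH hP using hcon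
  have hzero (ℓ : Fin 3) : coord ℓ (P ℓ) = 0 := by have := hP ℓ; omega
  have hpos (ℓ m : Fin 3) (hm : m ≠ ℓ) : 0 < emb (P ℓ) m := by
    rw [emb_apply]
    exact_mod_cast coord_pos_of_coord_eq_zero (hsub (hPH ℓ)) (hzero ℓ) hm
  have not_between (a b c : Fin 3) (ha : b ≠ a) (hc : b ≠ c) :
      ¬ Wbtw ℚ (emb (P a)) (emb (P b)) (emb (P c)) := fun h => by
    have := pos_of_wbtw h (hpos a b ha) (hpos c b hc)
    simp [emb_apply, hzero] at this
  have h3 : Collinear ℚ {emb (P 0), emb (P 1), emb (P 2)} := by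
    refine hcol.subset ?_
    rintro _ (rfl | rfl | rfl) <;> exact Set.mem_image_of_mem _ (hPH _)
  rcases h3.wbtw_or_wbtw_or_wbtw with h | h | h
  · exact not_between 0 1 2 (by decide) (by decide) h
  · exact not_between 1 2 0 (by decide) (by decide) h
  · exact not_between 2 0 1 (by decide) (by decide) h
end

section
/- Let n ≥ 1, let g ∈ ℂ[x,y,z] be homogeneous of degree n, and let a, c ∈ ℂ satisfy (a·x + y)·∂x g + a·y·∂y g + c·z·∂z g = 0. If a·(n − k) + c·k ≠ 0 for every integer k with 0 ≤ k ≤ n, then g = 0. -/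
/-!
The derivation `(a x + y) ∂x + a y ∂y + c z ∂z` splits as the diagonal operator
`a x ∂x + a y ∂y + c z ∂z`, which scales `x ^ i y ^ j z ^ k` by `a (i + j) + c k`, plus the nilpotent
operator `y ∂x`, which raises the exponent of `y` by one. In degree `n` the eigenvalues of the
diagonal part are the numbers `a (n - k) + c k`, all nonzero by hypothesis, so the derivation is
triangular with nonzero diagonal entries, hence injective. Concretely, comparing coefficients in the
equation expresses each coefficient of `g` through one with a smaller exponent of `y`, and all of
them vanish by induction on that exponent.
-/

open MvPolynomial

/-- Monomials are eigenvectors of the Euler operator `Xᵢ ∂ᵢ`, with eigenvalue the exponent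
of `Xᵢ`. -/
lemma coeff_X_mul_pderiv_self (i : Fin 3) (g : MvPolynomial (Fin 3) ℂ) (m : Fin 3 →₀ ℕ) :
    coeff m (X i * pderiv i g) = m i * coeff m g := by
  rw [coeff_X_mul']
  split_ifs with h
  · have h0 : 1 ≤ m i := Nat.one_le_iff_ne_zero.2 (Finsupp.mem_support_iff.1 h)
    rw [coeff_pderiv, tsub_add_cancel_of_le (Finsupp.single_le_iff.2 h0)]
    simp [Nat.cast_sub h0, mul_comm]
  · simp [Finsupp.notMem_support_iff.1 h]

theorem stmt_18 (n : ℕ) (hn : 1 ≤ n) (g : MvPolynomial (Fin 3) ℂ)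
    (hg : g.IsHomogeneous n) (a c : ℂ)
    (hsyz : (C a * X 0 + X 1) * pderiv 0 g + C a * X 1 * pderiv 1 g +
      C c * X 2 * pderiv 2 g = 0)
    (hnz : ∀ k : ℕ, k ≤ n → a * ((n : ℂ) - (k : ℂ)) + c * (k : ℂ) ≠ 0) :
    g = 0 := by
  have key : ∀ j : ℕ, ∀ m : Fin 3 →₀ ℕ, m 1 = j → coeff m g = 0 := by
    intro j
    induction j with
    | zero | succ j ih =>
      intro m hm
      by_cases hd : m.degree = n
      swap
      · exact hg.coeff_eq_zero hd
      have hs : m 0 + m 1 + m 2 = n := by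
        rw [← hd, Finsupp.degree_eq_sum, Fin.sum_univ_three]
      have h := congrArg (coeff m) hsyz
      simp only [add_mul, mul_assoc, coeff_add, coeff_C_mul, coeff_X_mul_pderiv_self,
        coeff_zero] at h
      -- The off-diagonal term only involves a coefficient with a smaller exponent of `y`.
      have hy : coeff m (X 1 * pderiv 0 g) = 0 := by
        rw [coeff_X_mul']
        split_ifs with h1
        · first
          | exact absurd hm (Finsupp.mem_support_iff.1 h1)
          | rw [coeff_pderiv, ih _ (by simp [hm]), zero_mul]
        · rfl
      have hk := hnz (m 2) (by omega)
      rw [hy] at h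
      rw [← hs] at hk
      push_cast at hk
      refine (mul_eq_zero.1 ?_).resolve_left hk
      linear_combination h
  ext m
  simpa using key _ m rfl
end
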